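/- Fix A, P > 0 and define g(r) = Q(r A) − Q( (r√(1+P) − 1) A ) for r > 0, where Q is the standard normal tail function. Let r* = ( √(A² + P ln(1+P)) + A√(1+P) ) / (A P). Then r* > 1/(√(1+P) − 1), and for every r ≥ 1/(√(1+P) − 1) one has g(r) ≤ g(r*); that is, r* maximizes g over the interval [1/(√(1+P) − 1), ∞). -/

import Mathlib

/-!
Write `s = √(1+P)` and let `φ` be the standard normal density, so that `Q' = -φ`. Then
`g'(r) = A (s φ((rs-1)A) - φ(rA)) = A φ(rA) (s e^{-D(r)/2} - 1)` with `D(r) = ((rs-1)A)² - (rA)²`,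
so `g'(r) ≥ 0` exactly when `D(r) ≤ 2 log s = log (1+P)`. As
`D(r) = A² (r(s-1) - 1) (r(s+1) - 1)` is a product of factors that are nonnegative and increasing
for `r ≥ 1/(s-1)`, `g` increases there until the root `r*` of `D = log (1+P)` and decreases
afterwards. For `r ≤ 1/(s-1)` the two arguments of `Q` change order, so `g(r) ≤ 0 ≤ g(r*)`, and
`r*` is even a maximizer of `g` over the whole real line.
-/

open MeasureTheory

/-- The standard normal tail function `Q(x) = ∫_x^∞ e^{-y²/2}/√(2π) dy`. -/
noncomputable def gaussQ (x : ℝ) : ℝ :=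
  ∫ y in Set.Ioi x, Real.exp (-(y ^ 2) / 2) / Real.sqrt (2 * Real.pi)

open Set ProbabilityTheory

theorem hasDerivAt_setIntegral_Ioi {E : Type*} [NormedAddCommGroup E] [NormedSpace ℝ E]
    [CompleteSpace E] {f : ℝ → E} {a x : ℝ} (hf : IntegrableOn f (Ioi a)) (hax : a < x)
    (hcont : ContinuousAt f x) :
    HasDerivAt (fun z => ∫ t in Ioi z, f t) (-f x) x := by
  have hmeas : StronglyMeasurableAtFilter f (nhds x) :=
    ⟨Ioi a, Ioi_mem_nhds hax, hf.aestronglyMeasurable⟩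
  have hint : IntervalIntegrable f volume a x :=
    (intervalIntegrable_iff_integrableOn_Ioc_of_le hax.le).2 (hf.mono_set Ioc_subset_Ioi_self)
  refine ((intervalIntegral.integral_hasDerivAt_right hint hmeas hcont).const_sub
    (∫ t in Ioi a, f t)).congr_of_eventuallyEq ?_
  filter_upwards [Ioi_mem_nhds hax] with z hz
  rw [← intervalIntegral.integral_Ioi_sub_Ioi hf (le_of_lt hz), sub_sub_cancel]

theorem gaussianPDFReal_zero_one (x : ℝ) :
    gaussianPDFReal 0 1 x = Real.exp (-(x ^ 2) / 2) / Real.sqrt (2 * Real.pi) := by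
  simp [gaussianPDFReal, div_eq_inv_mul]

theorem gaussQ_eq_setIntegral_gaussianPDFReal (x : ℝ) :
    gaussQ x = ∫ y in Ioi x, gaussianPDFReal 0 1 y := by
  simp only [gaussQ, gaussianPDFReal_zero_one]

theorem hasDerivAt_gaussQ (x : ℝ) : HasDerivAt gaussQ (-gaussianPDFReal 0 1 x) x := by
  have hcont : Continuous (gaussianPDFReal 0 1) := by
    unfold gaussianPDFReal
    fun_prop
  rw [funext gaussQ_eq_setIntegral_gaussianPDFReal]
  exact hasDerivAt_setIntegral_Ioi (integrable_gaussianPDFReal 0 1).integrableOn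
    (sub_one_lt x) hcont.continuousAt

theorem antitone_gaussQ : Antitone gaussQ :=
  antitone_of_hasDerivAt_nonpos hasDerivAt_gaussQ
    fun x => neg_nonpos.2 (gaussianPDFReal_nonneg 0 1 x)

section SqDiff

/-- The difference `D(r) = ((rs - 1)A)² - (rA)²` of the squared arguments of `Q` in `g(r)`, where
`s` stands for `√(1 + P)`. It is twice the log-likelihood ratio of the standard normal density
at `rA` and `(rs - 1)A`, and so governs the sign of `g'`. -/
def sqDiff (A s r : ℝ) : ℝ :=
  ((r * s - 1) * A) ^ 2 - (r * A) ^ 2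

/-- The larger solution `r` of the quadratic equation `sqDiff A s r = L`, for `A > 0` and `s > 1`;
at `s = √(1 + P)` and `L = log (1 + P)` it is `r*`. -/
noncomputable def sqDiffRoot (A s L : ℝ) : ℝ :=
  (Real.sqrt (A ^ 2 + (s ^ 2 - 1) * L) + A * s) / (A * (s ^ 2 - 1))

variable {A s L : ℝ}

theorem sqDiff_eq_mul (A s r : ℝ) :
    sqDiff A s r = A ^ 2 * ((r * (s - 1) - 1) * (r * (s + 1) - 1)) := by
  unfold sqDiff
  ring

theorem monotoneOn_sqDiff (A : ℝ) (hs : 1 < s) :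
    MonotoneOn (sqDiff A s) (Ici (1 / (s - 1))) := by
  intro x hx y _ hxy
  have hs' : 0 < s - 1 := sub_pos.2 hs
  have hx1 : 1 ≤ x * (s - 1) := (div_le_iff₀ hs').1 hx
  have hx0 : 0 ≤ x := (one_div_pos.2 hs').le.trans hx
  have hy1 : x * (s - 1) ≤ y * (s - 1) := by gcongr
  rw [sqDiff_eq_mul, sqDiff_eq_mul]
  gcongr <;> linarith

theorem sqDiff_sqDiffRoot (hA : A ≠ 0) (hs : s ^ 2 ≠ 1) (hL : 0 ≤ A ^ 2 + (s ^ 2 - 1) * L) :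
    sqDiff A s (sqDiffRoot A s L) = L := by
  have hs' : s ^ 2 - 1 ≠ 0 := sub_ne_zero.2 hs
  have hS := Real.sq_sqrt hL
  unfold sqDiff sqDiffRoot
  set S := Real.sqrt (A ^ 2 + (s ^ 2 - 1) * L)
  field_simp
  linear_combination (s ^ 2 - 1) * hS

theorem one_div_sub_one_lt_sqDiffRoot (hA : 0 < A) (hs : 1 < s) (hL : 0 < L) :
    1 / (s - 1) < sqDiffRoot A s L := by
  have hs' : 0 < s - 1 := sub_pos.2 hs
  have hs2 : 0 < s ^ 2 - 1 := by nlinarith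
  have hS : A < Real.sqrt (A ^ 2 + (s ^ 2 - 1) * L) :=
    Real.lt_sqrt_of_sq_lt (lt_add_of_pos_right _ (mul_pos hs2 hL))
  calc 1 / (s - 1) = (A + A * s) / (A * (s ^ 2 - 1)) := by
        rw [div_eq_div_iff hs'.ne' (mul_pos hA hs2).ne']
        ring
    _ < sqDiffRoot A s L := by
        unfold sqDiffRoot
        gcongr

end SqDiff

section GaussQDiff

/-- The function `g(r) = Q(rA) - Q((rs - 1)A)`, where `s` stands for `√(1 + P)`. -/
noncomputable def gaussQDiff (A s r : ℝ) : ℝ :=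
  gaussQ (r * A) - gaussQ ((r * s - 1) * A)

variable {A s r m : ℝ}

theorem gaussianPDFReal_mul_exp_sqDiff (A s r : ℝ) :
    gaussianPDFReal 0 1 (r * A) * Real.exp (-sqDiff A s r / 2) =
      gaussianPDFReal 0 1 ((r * s - 1) * A) := by
  rw [gaussianPDFReal_zero_one, gaussianPDFReal_zero_one, div_mul_eq_mul_div, ← Real.exp_add]
  congr 2
  unfold sqDiff
  ring

theorem hasDerivAt_gaussQDiff (A s r : ℝ) :
    HasDerivAt (gaussQDiff A s)
      (A * gaussianPDFReal 0 1 (r * A) * (s * Real.exp (-sqDiff A s r / 2) - 1)) r := by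
  have hleft : HasDerivAt (fun r => r * A) A r := hasDerivAt_mul_const A
  have hright : HasDerivAt (fun r => (r * s - 1) * A) (s * A) r :=
    ((hasDerivAt_mul_const s).sub_const 1).mul_const A
  refine (((hasDerivAt_gaussQ _).comp r hleft).sub
    ((hasDerivAt_gaussQ _).comp r hright)).congr_deriv ?_
  rw [← gaussianPDFReal_mul_exp_sqDiff]
  ring

theorem deriv_gaussQDiff_eq (A : ℝ) (hs : 0 < s) (r : ℝ) :
    deriv (gaussQDiff A s) r =
      A * gaussianPDFReal 0 1 (r * A) * (Real.exp ((2 * Real.log s - sqDiff A s r) / 2) - 1) := by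
  have hexp : Real.exp ((2 * Real.log s - sqDiff A s r) / 2) =
      s * Real.exp (-sqDiff A s r / 2) := by
    rw [sub_eq_add_neg, add_div, Real.exp_add, mul_div_cancel_left₀ _ two_ne_zero, Real.exp_log hs]
  rw [(hasDerivAt_gaussQDiff A s r).deriv, hexp]

theorem deriv_gaussQDiff_nonneg (hA : 0 ≤ A) (hs : 0 < s) (h : sqDiff A s r ≤ 2 * Real.log s) :
    0 ≤ deriv (gaussQDiff A s) r := by
  rw [deriv_gaussQDiff_eq A hs]
  refine mul_nonneg (mul_nonneg hA (gaussianPDFReal_nonneg ..)) (sub_nonneg.2 ?_)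
  exact Real.one_le_exp (by linarith)

theorem deriv_gaussQDiff_nonpos (hA : 0 ≤ A) (hs : 0 < s) (h : 2 * Real.log s ≤ sqDiff A s r) :
    deriv (gaussQDiff A s) r ≤ 0 := by
  rw [deriv_gaussQDiff_eq A hs]
  refine mul_nonpos_of_nonneg_of_nonpos (mul_nonneg hA (gaussianPDFReal_nonneg ..))
    (sub_nonpos.2 ?_)
  exact Real.exp_le_one_iff.2 (by linarith)

theorem gaussQDiff_nonneg (hA : 0 ≤ A) (h : r ≤ r * s - 1) : 0 ≤ gaussQDiff A s r :=
  sub_nonneg.2 (antitone_gaussQ (mul_le_mul_of_nonneg_right h hA))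

theorem gaussQDiff_nonpos (hA : 0 ≤ A) (h : r * s - 1 ≤ r) : gaussQDiff A s r ≤ 0 :=
  sub_nonpos.2 (antitone_gaussQ (mul_le_mul_of_nonneg_right h hA))

theorem isMaxOn_gaussQDiff_Ici (hA : 0 ≤ A) (hs : 1 < s) (hm : 1 / (s - 1) ≤ m)
    (hroot : sqDiff A s m = 2 * Real.log s) :
    IsMaxOn (gaussQDiff A s) (Ici (1 / (s - 1))) m := by
  have hs0 : 0 < s := one_pos.trans hs
  have hdiff : Differentiable ℝ (gaussQDiff A s) := fun r =>
    (hasDerivAt_gaussQDiff A s r).differentiableAt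
  have hmono := monotoneOn_sqDiff A hs
  refine isMaxOn_Ici_of_deriv (hdiff _).continuousAt (hdiff _).continuousAt
    hdiff.differentiableOn hdiff.differentiableOn (fun r hr => ?_) (fun r hr => ?_)
  · exact deriv_gaussQDiff_nonneg hA hs0 (hroot ▸ hmono hr.1.le hm hr.2.le)
  · exact deriv_gaussQDiff_nonpos hA hs0 (hroot ▸ hmono hm (hm.trans hr.le) hr.le)

theorem gaussQDiff_le_of_sqDiff_eq (hA : 0 ≤ A) (hs : 1 < s) (hm : 1 / (s - 1) ≤ m)
    (hroot : sqDiff A s m = 2 * Real.log s) (r : ℝ) :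
    gaussQDiff A s r ≤ gaussQDiff A s m := by
  have hs' : 0 < s - 1 := sub_pos.2 hs
  rcases le_total (1 / (s - 1)) r with hr | hr
  · exact isMaxOn_gaussQDiff_Ici hA hs hm hroot hr
  · have hr1 : r * (s - 1) ≤ 1 := (le_div_iff₀ hs').1 hr
    have hm1 : 1 ≤ m * (s - 1) := (div_le_iff₀ hs').1 hm
    exact (gaussQDiff_nonpos hA (by linarith)).trans (gaussQDiff_nonneg hA (by linarith))

end GaussQDiff

theorem gaussQ_difference_maximizer_general
    (A P : ℝ) (hA : 0 < A) (hP : 0 < P)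
    (g : ℝ → ℝ)
    (hg : ∀ r, g r = gaussQ (r * A) - gaussQ ((r * Real.sqrt (1 + P) - 1) * A))
    (rstar : ℝ)
    (hrstar : rstar =
      (Real.sqrt (A ^ 2 + P * Real.log (1 + P)) + A * Real.sqrt (1 + P)) / (A * P)) :
    1 / (Real.sqrt (1 + P) - 1) < rstar ∧ ∀ r : ℝ, g r ≤ g rstar := by
  obtain rfl : g = gaussQDiff A (Real.sqrt (1 + P)) := funext hg
  have hlog : Real.log (1 + P) = 2 * Real.log (Real.sqrt (1 + P)) := by
    rw [Real.log_sqrt (by positivity), mul_div_cancel₀ _ two_ne_zero]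
  have hP_eq : P = Real.sqrt (1 + P) ^ 2 - 1 := by
    rw [Real.sq_sqrt (by positivity), add_sub_cancel_left]
  have hs : 1 < Real.sqrt (1 + P) := Real.lt_sqrt_of_sq_lt (by linarith)
  have hL : 0 < Real.log (1 + P) := Real.log_pos (by linarith)
  have hroot : rstar = sqDiffRoot A (Real.sqrt (1 + P)) (Real.log (1 + P)) := by
    rw [hrstar, sqDiffRoot, ← hP_eq]
  have hlt : 1 / (Real.sqrt (1 + P) - 1) < rstar :=
    hroot ▸ one_div_sub_one_lt_sqDiffRoot hA hs hL
  have hcrossing : sqDiff A (Real.sqrt (1 + P)) rstar = 2 * Real.log (Real.sqrt (1 + P)) := by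
    rw [hroot, ← hlog]
    exact sqDiff_sqDiffRoot hA.ne' (by linarith) (by rw [← hP_eq]; positivity)
  exact ⟨hlt, gaussQDiff_le_of_sqDiff_eq hA.le hs hlt.le hcrossing⟩

/-- Fix `A, P > 0` and let `g(r) = Q(rA) - Q((r√(1+P)-1)A)` and
`r* = (√(A² + P ln(1+P)) + A√(1+P))/(AP)`. Then `r* > 1/(√(1+P)-1)` and `g(r) ≤ g(r*)` for
every `r ≥ 1/(√(1+P)-1)`, i.e. `r*` maximizes `g` on `[1/(√(1+P)-1), ∞)`. -/
theorem gaussQ_difference_maximizer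
    (A P : ℝ) (hA : 0 < A) (hP : 0 < P)
    (g : ℝ → ℝ)
    (hg : ∀ r, g r = gaussQ (r * A) - gaussQ ((r * Real.sqrt (1 + P) - 1) * A))
    (rstar : ℝ)
    (hrstar : rstar =
      (Real.sqrt (A ^ 2 + P * Real.log (1 + P)) + A * Real.sqrt (1 + P)) / (A * P)) :
    1 / (Real.sqrt (1 + P) - 1) < rstar ∧
      ∀ r : ℝ, 1 / (Real.sqrt (1 + P) - 1) ≤ r → g r ≤ g rstar :=
  (gaussQ_difference_maximizer_general A P hA hP g hg rstar hrstar).imp_right fun h r _ => h r
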